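/- arXiv:1101.0444 — 2 statements merged into one kernel-verified Lean document; each statement's English description precedes it below -/
import Mathlib

section
/- Let X be a compact metric space. For every j ≥ 2, the homotopy group π_j(C(X, ℂ∖{0}), c₁) based at the constant map c₁ with value 1 is trivial. -/
open Topology

open scoped unitInterval in
/-- Any generalized loop of dimension `≥ 2` is null-homotopic. -/
theorem stmt7_aux {X : Type*} [MetricSpace X] [CompactSpace X] (j : ℕ) (hj : 2 ≤ j)
    (f : GenLoop (Fin j) C(X, {z : ℂ // z ≠ 0}) (ContinuousMap.const X ⟨1, one_ne_zero⟩)) :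
    GenLoop.Homotopic f GenLoop.const := by
  have cov := Complex.isCoveringMap_exp
  let F : C((Fin j → I) × X, {z : ℂ // z ≠ 0}) := f.1.uncurry
  have hFb : ∀ y ∈ Cube.boundary (Fin j), ∀ x, F (y, x) = ⟨1, one_ne_zero⟩ := by
    intro y hy x
    change f.1 y x = _
    rw [f.2 y hy]; rfl
  let i0 : Fin j := ⟨0, by omega⟩
  let H : C(I × ((Fin j → I) × X), {z : ℂ // z ≠ 0}) :=
    F.comp ⟨fun p => (fun i => p.1 * p.2.1 i, p.2.2), by fun_prop⟩
  have H0 : ∀ a, H (0, a) = (fun z : ℂ ↦ (⟨_, z.exp_ne_zero⟩ : {z : ℂ // z ≠ 0}))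
      ((ContinuousMap.const _ (0 : ℂ) : C((Fin j → I) × X, ℂ)) a) := by
    rintro ⟨y, x⟩
    refine (hFb _ ⟨i0, Or.inl ?_⟩ x).trans ?_
    · simp
    · simp
  let L := cov.liftHomotopy H (ContinuousMap.const _ (0 : ℂ)) H0
  have hL : ∀ a, (⟨Complex.exp (L a), Complex.exp_ne_zero _⟩ : {z : ℂ // z ≠ 0}) = H a :=
    fun a => congrFun (cov.liftHomotopy_lifts H _ H0) a
  have hL0 : ∀ a, L (0, a) = 0 := cov.liftHomotopy_zero H _ H0
  let G : C((Fin j → I) × X, ℂ) := L.comp ⟨fun p => (1, p), by fun_prop⟩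
  have hG : ∀ a, (⟨Complex.exp (G a), Complex.exp_ne_zero _⟩ : {z : ℂ // z ≠ 0}) = F a := by
    rintro ⟨y, x⟩
    refine (hL _).trans ?_
    change F (_, _) = _
    simp
  -- the lift is constant on each face
  have hface : ∀ (i : Fin j) (e : I), (e = 0 ∨ e = 1) → ∀ x (y y' : Fin j → I), y i = e →
      y' i = e → G (y, x) = G (y', x) := by
    intro i e he x y y' hy hy'
    let c : (Fin j → I) → (Fin j → I) := fun z => Function.update z i e
    have hc : Continuous c := by fun_prop
    have hcb : ∀ z, c z ∈ Cube.boundary (Fin j) := fun z => ⟨i, by simpa [c] using he⟩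
    have := cov.const_of_comp (g := fun z => G (c z, x)) (by fun_prop)
      (by intro a b; exact ((hG _).trans (hFb _ (hcb a) x)).trans
            ((hG _).trans (hFb _ (hcb b) x)).symm) y y'
    have h1 : c y = y := by simp [c, ← hy]
    have h2 : c y' = y' := by simp [c, ← hy']
    simpa only [h1, h2] using this
  have hzero : ∀ x, G (fun _ => 0, x) = 0 := by
    intro x
    -- along the scaling path the lifted point stays at the corner
    have := cov.const_of_comp (A := I) (g := fun t => L (t, (fun _ => 0, x))) (by fun_prop)
      (by
        have key : ∀ t : I, H (t, (fun _ => 0, x)) = ⟨1, one_ne_zero⟩ := fun t =>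
          hFb _ ⟨i0, Or.inl (by simp)⟩ x
        intro a b; exact ((hL _).trans (key a)).trans ((hL _).trans (key b)).symm) 1 0
    exact this.trans (hL0 _)
  have hGb : ∀ y ∈ Cube.boundary (Fin j), ∀ x, G (y, x) = 0 := by
    have h0 : ∀ (i : Fin j) y x, y i = 0 → G (y, x) = 0 := fun i y x h =>
      (hface i 0 (Or.inl rfl) x y (fun _ => 0) h rfl).trans (hzero x)
    rintro y ⟨i, hi | hi⟩ x
    · exact h0 i y x hi
    · obtain ⟨k, hk⟩ : ∃ k : Fin j, k ≠ i := by
        haveI : Nontrivial (Fin j) := Fin.nontrivial_iff_two_le.2 hj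
        exact exists_ne i
      rw [hface i 1 (Or.inr rfl) x y (Function.update y k 0) hi
        (by rw [Function.update_of_ne hk.symm, hi])]
      exact h0 k _ x (by simp)
  let K : C((I × (Fin j → I)) × X, {z : ℂ // z ≠ 0}) :=
    ⟨fun p => ⟨Complex.exp ((1 - ((p.1.1 : ℝ) : ℂ)) * G (p.1.2, p.2)), Complex.exp_ne_zero _⟩,
      by fun_prop⟩
  refine ⟨⟨⟨K.curry, ?_, ?_⟩, ?_⟩⟩
  · intro y
    ext1 x
    refine Eq.trans ?_ (hG (y, x))
    simp [K]
  · intro y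
    ext1 x
    apply Subtype.ext
    simp [K, GenLoop.const]
  · intro t y hy
    ext1 x
    refine Eq.trans ?_ (hFb y hy x).symm
    apply Subtype.ext
    simp [K, hGb y hy x]

/-- For a compact metric space `X` and every `j ≥ 2`, the homotopy group
`π_j(C(X, ℂ∖{0}), c₁)` at the constant map with value `1` is trivial. -/
theorem stmt7 {X : Type*} [MetricSpace X] [CompactSpace X] (j : ℕ) (hj : 2 ≤ j) :
    Subsingleton
      (π_ j C(X, {z : ℂ // z ≠ 0}) (ContinuousMap.const X ⟨1, one_ne_zero⟩)) := by
  constructor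
  intro a b
  induction a using Quotient.inductionOn
  induction b using Quotient.inductionOn
  exact Quotient.sound ((stmt7_aux j hj _).trans (stmt7_aux j hj _).symm)
end

section
/- Let X be a compact metric space. The fundamental group π₁(C(X, ℂ∖{0}), c₁) based at the constant map c₁ with value 1 is isomorphic to the additive group C(X, ℤ) of continuous integer-valued functions on X (ℤ discrete, addition pointwise). -/
open Topology

namespace StmtAux

open unitInterval

/-- The punctured complex plane. -/
abbrev CStar := {z : ℂ // z ≠ 0}

/-- The exponential as a continuous map onto the punctured plane. -/
noncomputable def expMap : C(ℂ, CStar) :=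
  ⟨fun z : ℂ => (⟨_, z.exp_ne_zero⟩ : {z : ℂ // z ≠ 0}), Complex.isCoveringMap_exp.continuous⟩

theorem cov : IsCoveringMap expMap := Complex.isCoveringMap_exp

variable {X : Type*} [TopologicalSpace X]

/-- Base point of the mapping space. -/
noncomputable abbrev bpt (X : Type*) [TopologicalSpace X] : C(X, CStar) :=
  ContinuousMap.const X ⟨1, one_ne_zero⟩

/-- Postcomposition with the exponential. -/
noncomputable def expC : C(C(X, ℂ), C(X, CStar)) :=
  ⟨fun f => expMap.comp f, ContinuousMap.continuous_postcomp _⟩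

/-- The function `2 π i n`. -/
noncomputable def cn (n : C(X, ℤ)) : C(X, ℂ) :=
  ⟨fun x => (n x : ℂ) * (2 * Real.pi * Complex.I), by
    have h : Continuous fun k : ℤ => (k : ℂ) := continuous_of_discreteTopology
    exact (h.comp n.continuous).mul continuous_const⟩

theorem cn_apply (n : C(X, ℤ)) (x : X) : cn n x = (n x : ℂ) * (2 * Real.pi * Complex.I) := rfl

theorem cn_add (n m : C(X, ℤ)) : cn (n + m) = cn m + cn n := by
  ext x; simp [cn_apply]; ring

theorem cn_inj {n m : C(X, ℤ)} (h : cn n = cn m) : n = m := by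
  ext x
  have := DFunLike.congr_fun h x
  simpa [cn_apply, Complex.two_pi_I_ne_zero] using this

theorem expMap_add_cn (z : ℂ) (n : C(X, ℤ)) (x : X) : expMap (z + cn n x) = expMap z := by
  apply Subtype.ext
  change Complex.exp _ = Complex.exp _
  rw [cn_apply, Complex.exp_add, Complex.exp_int_mul_two_pi_mul_I, mul_one]

theorem expC_cn (n : C(X, ℤ)) : expC (cn n) = bpt X := by
  ext x
  exact Complex.exp_int_mul_two_pi_mul_I _

theorem expC_zero : expC (0 : C(X, ℂ)) = bpt X := by
  ext x
  exact Complex.exp_zero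

/-- `γ` lifts to a path from `0` to `2 π i n`. -/
def R (γ : Path (bpt X) (bpt X)) (n : C(X, ℤ)) : Prop :=
  ∃ G : Path (0 : C(X, ℂ)) (cn n), ∀ t, expC (G t) = γ t

theorem exists_int (g : C(X, ℂ)) (h : expC g = bpt X) : ∃ n : C(X, ℤ), cn n = g := by
  have h1 : ∀ x, ∃ k : ℤ, g x = k * (2 * Real.pi * Complex.I) := by
    intro x
    have := congrArg Subtype.val (DFunLike.congr_fun h x)
    exact Complex.exp_eq_one_iff.mp this
  choose k hk using h1
  have hc : Continuous k := by
    rw [Int.isClosedEmbedding_coe_real.isEmbedding.continuous_iff]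
    have : (fun x => ((k x : ℤ) : ℝ)) = fun x => (g x / (2 * Real.pi * Complex.I)).re := by
      ext x
      rw [hk, mul_div_cancel_right₀ _ Complex.two_pi_I_ne_zero]
      simp
    change Continuous (fun x => ((k x : ℤ) : ℝ))
    rw [this]
    exact Complex.continuous_re.comp (g.continuous.div_const _)
  refine ⟨⟨k, hc⟩, ?_⟩
  ext x
  exact (hk x).symm

theorem R_exists [LocallyCompactSpace X] (γ : Path (bpt X) (bpt X)) : ∃ n, R γ n := by
  let H : C(I × X, CStar) := ContinuousMap.uncurry γ.toContinuousMap
  have H0 : ∀ a, H (0, a) = expMap ((0 : C(X, ℂ)) a) := by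
    intro a
    have h1 : H (0, a) = γ 0 a := rfl
    rw [h1, γ.source, ← expC_zero]; rfl
  let L := cov.liftHomotopy H 0 H0
  have hL : ∀ t a, expMap (L (t, a)) = γ t a := fun t a =>
    congrFun (cov.liftHomotopy_lifts H 0 H0) (t, a)
  have hL' : ∀ t, expC (L.curry t) = γ t := by
    intro t
    ext1 a
    exact hL t a
  obtain ⟨n, hn⟩ := exists_int (L.curry 1) (by rw [hL', γ.target])
  refine ⟨n, ⟨L.curry, ?_, hn.symm⟩, hL'⟩
  ext1 a
  exact cov.liftHomotopy_zero H 0 H0 a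

theorem R_unique {γ γ' : Path (bpt X) (bpt X)} {n m : C(X, ℤ)} (h : R γ n) (h' : R γ' m)
    (hγ : γ.Homotopic γ') : n = m := by
  obtain ⟨G, hG⟩ := h
  obtain ⟨G', hG'⟩ := h'
  apply cn_inj
  ext1 x
  let ev : C(C(X, ℂ), ℂ) := ⟨fun f => f x, ContinuousEvalConst.continuous_eval_const x⟩
  let ev' : C(C(X, CStar), CStar) := ⟨fun f => f x, ContinuousEvalConst.continuous_eval_const x⟩
  have key : (ev.comp G.toContinuousMap).HomotopicRel (ev.comp G'.toContinuousMap) {0, 1} := by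
    rw [cov.homotopicRel_iff_comp ⟨0, by simp, by simp⟩]
    have h2 : (γ.map ev'.continuous).toContinuousMap.HomotopicRel
      (γ'.map ev'.continuous).toContinuousMap {0, 1} := hγ.map ev'
    convert! h2 using 1
    · ext1 t
      exact DFunLike.congr_fun (hG t) x
    · ext1 t
      exact DFunLike.congr_fun (hG' t) x
  obtain ⟨F⟩ := key
  have e1 := F.eq_fst 0 (x := 1) (by simp)
  have e2 := F.eq_snd 0 (x := 1) (by simp)
  have := e1.symm.trans e2
  simpa [ev] using this

theorem R_trans {γ γ' : Path (bpt X) (bpt X)} {n m : C(X, ℤ)} (h : R γ n) (h' : R γ' m) :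
    R (γ.trans γ') (n + m) := by
  obtain ⟨G, hG⟩ := h
  obtain ⟨G', hG'⟩ := h'
  refine ⟨G.trans ((G'.map (continuous_add_const (cn n))).cast (zero_add _).symm (cn_add n m)),
    fun t => ?_⟩
  rw [Path.trans_apply, Path.trans_apply]
  split_ifs
  · exact hG _
  · rw [← hG']
    ext1 x
    exact expMap_add_cn _ n x

theorem R_homotopic {γ γ' : Path (bpt X) (bpt X)} {n : C(X, ℤ)} (h : R γ n) (h' : R γ' n) :
    γ.Homotopic γ' := by
  obtain ⟨G, hG⟩ := h
  obtain ⟨G', hG'⟩ := h'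
  have : G.Homotopic G' := SimplyConnectedSpace.paths_homotopic G G'
  have := this.map expC
  have key : (G.map expC.continuous).toContinuousMap.HomotopicRel
    (G'.map expC.continuous).toContinuousMap {0, 1} := this
  have e : (G.map expC.continuous).toContinuousMap = γ.toContinuousMap := by
    ext1 t; exact hG t
  have e' : (G'.map expC.continuous).toContinuousMap = γ'.toContinuousMap := by
    ext1 t; exact hG' t
  rw [e, e'] at key
  exact key

theorem R_surj (n : C(X, ℤ)) : ∃ γ, R γ n := by
  let G : Path (0 : C(X, ℂ)) (cn n) := PathConnectedSpace.somePath _ _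
  exact ⟨(G.map expC.continuous).cast expC_zero.symm (expC_cn n).symm, G, fun t => rfl⟩

end StmtAux

open StmtAux in
/-- For a compact metric space `X`, the fundamental group of `C(X, ℂ∖{0})` at the
constant map with value `1` is isomorphic to the additive group `C(X, ℤ)` of continuous
integer-valued functions. -/
theorem stmt8 {X : Type*} [MetricSpace X] [CompactSpace X] :
    Nonempty
      ((π_ 1 C(X, {z : ℂ // z ≠ 0}) (ContinuousMap.const X ⟨1, one_ne_zero⟩)) ≃*
        Multiplicative C(X, ℤ)) := by
  choose D hD using fun γ : Path (bpt X) (bpt X) => R_exists γ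
  let Φ : FundamentalGroup C(X, CStar) (bpt X) → Multiplicative C(X, ℤ) :=
    fun q => Quotient.lift (fun γ => Multiplicative.ofAdd (D γ))
      (fun a b h => congrArg _ (R_unique (hD a) (hD b) h)) q
  have hmul : ∀ p q, Φ (p * q) = Φ p * Φ q := by
    intro p q
    induction p using Quotient.inductionOn with | _ a
    induction q using Quotient.inductionOn with | _ b
    have h1 := R_unique (hD (b.trans a)) (R_trans (hD b) (hD a)) (Path.Homotopic.refl _)
    rw [mul_comm]
    exact congrArg Multiplicative.ofAdd h1
  have hinj : Function.Injective Φ := by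
    intro p q h
    induction p using Quotient.inductionOn with | _ a
    induction q using Quotient.inductionOn with | _ b
    have h1 : D a = D b := h
    exact Quotient.sound (R_homotopic (hD a) (h1 ▸ hD b))
  have hsurj : Function.Surjective Φ := by
    intro n
    obtain ⟨γ, hγ⟩ := R_surj (Multiplicative.toAdd n)
    exact ⟨Quotient.mk _ γ, R_unique (hD γ) hγ (Path.Homotopic.refl _)⟩
  exact ⟨HomotopyGroup.pi1MulEquivFundamentalGroup.trans
    (MulEquiv.ofBijective (MulHom.mk Φ hmul) ⟨hinj, hsurj⟩)⟩
end
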